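/- Structure theorem for the covariance of a coupled random walk. For i = 1, 2, let ⟨·,·⟩_i be an Ad_i-invariant inner product on ℝ^{m_i}, let θ̲_i := (1/#F_i)·∑_{f∈F_i} Ad_i(f), and equip ℝ^{m₁}×ℝ^{m₂} with the orthogonal-sum inner product. Let ν be a non-degenerate probability measure on Γ₁×Γ₂ with finite second moment, with marginals μ^{(1)}, μ^{(2)} (which are non-degenerate). For 𝐯, 𝐯' ∈ ℝ^{m₁}×ℝ^{m₂}, define B_ν(𝐯,𝐯') := ∑_{(x,s)} c(x,s)·u(x,s)·u'(x,s) − χ(u)·χ(u'), where u, u' are the harmonic parts of the 1-forms 𝐯̂(x,s) := ⟨𝐯, α(x,s)⟩ and 𝐯̂' with respect to (Γ₁×Γ₂, ν, Δ₁×Δ₂); define B_{μ^{(i)}} on ℝ^{m_i} analogously using (Γ_i, μ^{(i)}, Δ_i) and ⟨·,·⟩_i. Let ζ_ν := ∑_{(x,s)} c(x,s)·α(x,s) ∈ ℝ^{m₁}×ℝ^{m₂}. Then: (i) ζ_ν lies in range(θ̲₁) × range(θ̲₂); (ii) B_ν((v₁,0),(v₁',0)) = B_{μ^{(1)}}(v₁,v₁')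 for all v₁, v₁' ∈ ℝ^{m₁}, and B_ν((0,v₂),(0,v₂')) = B_{μ^{(2)}}(v₂,v₂') for all v₂, v₂' ∈ ℝ^{m₂}; (iii) B_ν((v₁,0),(0,v₂)) = 0 whenever v₁ is orthogonal to range(θ̲₁) (with respect to ⟨·,·⟩₁) or v₂ is orthogonal to range(θ̲₂) (with respect to ⟨·,·⟩₂). -/

import Mathlib

open scoped BigOperators Classical
open Filter Matrix MeasureTheory

namespace NSVA

noncomputable section

/-- Convolution of two real-valued functions on a group. -/
def conv {G : Type*} [Group G] (μ ν : G → ℝ) : G → ℝ :=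
  fun g => ∑' h : G, μ h * ν (h⁻¹ * g)

/-- Convolution powers: `convPow μ 0 = δ_1`, `convPow μ (n+1) = (convPow μ n) * μ`. -/
def convPow {G : Type*} [Group G] (μ : G → ℝ) : ℕ → G → ℝ
  | 0 => fun g => if g = 1 then 1 else 0
  | n + 1 => conv (convPow μ n) μ

/-- A probability measure on a countable set, viewed as a function. -/
def IsProb {G : Type*} (μ : G → ℝ) : Prop := (∀ g, 0 ≤ μ g) ∧ HasSum μ 1

/-- The support of `μ` generates the group as a semigroup. -/
def Nondeg {G : Type*} [Group G] (μ : G → ℝ) : Prop :=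
  ∀ g : G, g ∈ Subsemigroup.closure {x : G | 0 < μ x}

/-- `μ` is aperiodic: `μ_n(1) > 0` for all large enough `n`. -/
def Aperiodic {G : Type*} [Group G] (μ : G → ℝ) : Prop :=
  ∃ N : ℕ, ∀ n : ℕ, N ≤ n → 0 < convPow μ n 1

/-- Total variation distance between two (probability) functions. -/
def tv {Z : Type*} (p q : Z → ℝ) : ℝ := (1 / 2) * ∑' z : Z, |p z - q z|

/-- Word length with respect to a finite set `S₀`. -/
def wordLength {G : Type*} [Group G] (S₀ : Finset G) (g : G) : ℕ :=
  sInf {n : ℕ | ∃ l : List G, (∀ s ∈ l, s ∈ S₀) ∧ l.length = n ∧ l.prod = g}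

/-- Finite second moment with respect to a word metric given by a finite symmetric
generating set. -/
def FinSecondMoment {G : Type*} [Group G] (μ : G → ℝ) : Prop :=
  ∃ S₀ : Finset G, (∀ s ∈ S₀, s⁻¹ ∈ S₀) ∧ Subgroup.closure (S₀ : Set G) = ⊤ ∧
    Summable (fun g : G => (wordLength S₀ g : ℝ) ^ 2 * μ g)

/-- A group is virtually abelian if it has an abelian subgroup of finite index. -/
def VirtAbelian (G : Type*) [Group G] : Prop :=
  ∃ A : Subgroup G, A.index ≠ 0 ∧ ∀ a b : A, a * b = b * a

/-- The noised measure `π^ρ` on `G × G`. -/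
def noised {G : Type*} (μ : G → ℝ) (ρ : ℝ) : G × G → ℝ :=
  fun p => ρ * μ p.1 * μ p.2 + (1 - ρ) * μ p.1 * (if p.1 = p.2 then 1 else 0)

/-- First marginal of a measure on a product. -/
def marg1 {G₁ G₂ : Type*} (ν : G₁ × G₂ → ℝ) : G₁ → ℝ := fun γ₁ => ∑' γ₂ : G₂, ν (γ₁, γ₂)

/-- Second marginal of a measure on a product. -/
def marg2 {G₁ G₂ : Type*} (ν : G₁ × G₂ → ℝ) : G₂ → ℝ := fun γ₂ => ∑' γ₁ : G₁, ν (γ₁, γ₂)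

/-- A system of representatives of the right cosets `Λ\Γ` containing the identity,
together with the representative map `rep`, constant on right cosets. -/
structure RepSystem {Γ : Type*} [Group Γ] (Λ : Subgroup Γ) where
  Δ : Finset Γ
  one_mem : (1 : Γ) ∈ Δ
  rep : Γ → Γ
  rep_mem : ∀ γ : Γ, rep γ ∈ Δ
  rep_spec : ∀ γ : Γ, γ * (rep γ)⁻¹ ∈ Λ
  rep_idem : ∀ x ∈ Δ, rep x = x
  rep_coset : ∀ γ : Γ, ∀ v ∈ Λ, rep (v * γ) = rep γ

variable {Γ : Type*} [Group Γ] {Λ : Subgroup Γ} {m : ℕ}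

/-- The cocycle `α(x,s) = ψ(x·s·(x^s)⁻¹) ∈ ℤ^m`. -/
def cocycle (ψ : Λ ≃* Multiplicative (Fin m → ℤ)) (R : RepSystem Λ) (x s : Γ) : Fin m → ℤ :=
  Multiplicative.toAdd (ψ ⟨x * s * (R.rep (x * s))⁻¹, R.rep_spec (x * s)⟩)

/-- The transfer homomorphism `θ(γ) = ∑_{x∈Δ} α(x,γ)`. -/
def transfer (ψ : Λ ≃* Multiplicative (Fin m → ℤ)) (R : RepSystem Λ) (γ : Γ) : Fin m → ℤ :=
  ∑ x ∈ R.Δ, cocycle ψ R x γ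

/-- `Φ(γ) = ψ(v)` where `γ = v·x`, `v ∈ Λ`, `x ∈ Δ`. -/
def Phi (ψ : Λ ≃* Multiplicative (Fin m → ℤ)) (R : RepSystem Λ) (γ : Γ) : Fin m → ℤ :=
  Multiplicative.toAdd (ψ ⟨γ * (R.rep γ)⁻¹, R.rep_spec γ⟩)

/-- A 1-form on the quotient diagram. -/
def IsOneForm (R : RepSystem Λ) (ω : Γ → Γ → ℝ) : Prop :=
  ∀ x ∈ R.Δ, ∀ s : Γ, ω (R.rep (x * s)) s⁻¹ = -ω x s

/-- `χ(ω) = ∑_{x∈Δ} ∑_s c(x,s)·ω(x,s)` where `c(x,s) = μ(s)/#F`. -/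
def chi (R : RepSystem Λ) (μ : Γ → ℝ) (ω : Γ → Γ → ℝ) : ℝ :=
  ∑ x ∈ R.Δ, ∑' s : Γ, μ s / (Λ.index : ℝ) * ω x s

/-- Square-integrability of a 1-form. -/
def SqInt (R : RepSystem Λ) (μ : Γ → ℝ) (ω : Γ → Γ → ℝ) : Prop :=
  ∀ x ∈ R.Δ, Summable (fun s : Γ => μ s / (Λ.index : ℝ) * ω x s ^ 2)

/-- Harmonicity of a (square-integrable) 1-form. -/
def Harmonic (R : RepSystem Λ) (μ : Γ → ℝ) (ω : Γ → Γ → ℝ) : Prop :=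
  SqInt R μ ω ∧ ∀ x ∈ R.Δ, (∑' s : Γ, μ s * ω x s) = chi R μ ω

/-- The differential `df(x,s) = f(x^s) − f(x)`. -/
def dd (R : RepSystem Λ) (f : Γ → ℝ) : Γ → Γ → ℝ := fun x s => f (R.rep (x * s)) - f x

/-- `(u, f)` is a harmonic decomposition of the 1-form `ω`: `ω = u + df` with `u`
a harmonic 1-form. -/
def IsHarmDecomp (R : RepSystem Λ) (μ : Γ → ℝ) (ω u : Γ → Γ → ℝ) (f : Γ → ℝ) : Prop :=
  IsOneForm R u ∧ Harmonic R μ u ∧ ∀ x ∈ R.Δ, ∀ s : Γ, ω x s = u x s + dd R f x s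

/-- The 1-form `v̂(x,s) = ⟨v, α(x,s)⟩` (standard inner product). -/
def vhat (ψ : Λ ≃* Multiplicative (Fin m → ℤ)) (R : RepSystem Λ) (v : Fin m → ℝ) :
    Γ → Γ → ℝ :=
  fun x s => ∑ i, v i * (cocycle ψ R x s i : ℝ)

/-- The 1-form `v̂(x,s) = B(v, α(x,s))` for a bilinear form `B`. -/
def vhatB (ψ : Λ ≃* Multiplicative (Fin m → ℤ)) (R : RepSystem Λ)
    (B : (Fin m → ℝ) →ₗ[ℝ] (Fin m → ℝ) →ₗ[ℝ] ℝ) (v : Fin m → ℝ) : Γ → Γ → ℝ :=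
  fun x s => B v (fun i => (cocycle ψ R x s i : ℝ))

/-- The drift `ζ = (1/#F)·∑_{x∈Δ}∑_s μ(s)·α(x,s) ∈ ℝ^m`. -/
def drift (ψ : Λ ≃* Multiplicative (Fin m → ℤ)) (R : RepSystem Λ) (μ : Γ → ℝ) : Fin m → ℝ :=
  fun i => (Λ.index : ℝ)⁻¹ * ∑ x ∈ R.Δ, ∑' s : Γ, μ s * (cocycle ψ R x s i : ℝ)

/-- The covariance pairing `∑_{x,s} c(x,s)·u(x,s)·u'(x,s) − χ(u)·χ(u')`. -/
def cov (R : RepSystem Λ) (μ : Γ → ℝ) (u u' : Γ → Γ → ℝ) : ℝ :=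
  (∑ x ∈ R.Δ, ∑' s : Γ, μ s / (Λ.index : ℝ) * (u x s * u' x s)) - chi R μ u * chi R μ u'

/-- The transfer operator `ℒ_v` acting on functions `Δ → ℂ`. -/
def transferOp (ψ : Λ ≃* Multiplicative (Fin m → ℤ)) (R : RepSystem Λ) (μ : Γ → ℝ)
    (v : Fin m → ℝ) (f : Γ → ℂ) : Γ → ℂ :=
  fun x => ∑' s : Γ, (μ s : ℂ) *
    Complex.exp (2 * Real.pi * Complex.I * ((∑ i, v i * (cocycle ψ R x s i : ℝ)) : ℝ)) *
    f (R.rep (x * s))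

/-- The Gaussian density `ξ_A(w)` associated with a (positive-definite) matrix `A`. -/
def gauss {d : ℕ} (A : Matrix (Fin d) (Fin d) ℝ) (w : Fin d → ℝ) : ℝ :=
  (2 * Real.pi) ^ (-(d : ℝ) / 2) * A.det ^ (-(1 : ℝ) / 2) *
    Real.exp (-(w ⬝ᵥ A⁻¹.mulVec w) / 2)

/-- The product representative system for `Λ₁ × Λ₂ ≤ Γ₁ × Γ₂`. -/
def prodRep {Γ₁ : Type*} [Group Γ₁] {Γ₂ : Type*} [Group Γ₂]
    {Λ₁ : Subgroup Γ₁} {Λ₂ : Subgroup Γ₂}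
    (R₁ : RepSystem Λ₁) (R₂ : RepSystem Λ₂) : RepSystem (Λ₁.prod Λ₂) where
  Δ := R₁.Δ ×ˢ R₂.Δ
  one_mem := Finset.mem_product.mpr ⟨R₁.one_mem, R₂.one_mem⟩
  rep := fun p => (R₁.rep p.1, R₂.rep p.2)
  rep_mem := fun p => Finset.mem_product.mpr ⟨R₁.rep_mem p.1, R₂.rep_mem p.2⟩
  rep_spec := fun p => Subgroup.mem_prod.mpr ⟨R₁.rep_spec p.1, R₂.rep_spec p.2⟩
  rep_idem := fun x hx => by
    rcases Finset.mem_product.mp hx with ⟨h1, h2⟩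
    exact Prod.ext_iff.mpr ⟨R₁.rep_idem x.1 h1, R₂.rep_idem x.2 h2⟩
  rep_coset := fun p v hv => by
    rcases Subgroup.mem_prod.mp hv with ⟨h1, h2⟩
    exact Prod.ext_iff.mpr ⟨R₁.rep_coset p.1 v.1 h1, R₂.rep_coset p.2 v.2 h2⟩

/-- The 1-form `𝐯̂(x,s) = ⟨𝐯, α(x,s)⟩` on a product, standard inner product. -/
def vhat2 {Γ₁ : Type*} [Group Γ₁] {Γ₂ : Type*} [Group Γ₂]
    {Λ₁ : Subgroup Γ₁} {Λ₂ : Subgroup Γ₂} {m₁ m₂ : ℕ}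
    (ψ₁ : Λ₁ ≃* Multiplicative (Fin m₁ → ℤ)) (R₁ : RepSystem Λ₁)
    (ψ₂ : Λ₂ ≃* Multiplicative (Fin m₂ → ℤ)) (R₂ : RepSystem Λ₂)
    (v : (Fin m₁ → ℝ) × (Fin m₂ → ℝ)) : (Γ₁ × Γ₂) → (Γ₁ × Γ₂) → ℝ :=
  fun x s => (∑ i, v.1 i * (cocycle ψ₁ R₁ x.1 s.1 i : ℝ)) +
    ∑ i, v.2 i * (cocycle ψ₂ R₂ x.2 s.2 i : ℝ)

/-- The 1-form `𝐯̂(x,s) = ⟨𝐯, α(x,s)⟩` on a product, orthogonal-sum of the two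
bilinear forms `B₁`, `B₂`. -/
def vhatB2 {Γ₁ : Type*} [Group Γ₁] {Γ₂ : Type*} [Group Γ₂]
    {Λ₁ : Subgroup Γ₁} {Λ₂ : Subgroup Γ₂} {m₁ m₂ : ℕ}
    (ψ₁ : Λ₁ ≃* Multiplicative (Fin m₁ → ℤ)) (R₁ : RepSystem Λ₁)
    (B₁ : (Fin m₁ → ℝ) →ₗ[ℝ] (Fin m₁ → ℝ) →ₗ[ℝ] ℝ)
    (ψ₂ : Λ₂ ≃* Multiplicative (Fin m₂ → ℤ)) (R₂ : RepSystem Λ₂)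
    (B₂ : (Fin m₂ → ℝ) →ₗ[ℝ] (Fin m₂ → ℝ) →ₗ[ℝ] ℝ)
    (v : (Fin m₁ → ℝ) × (Fin m₂ → ℝ)) : (Γ₁ × Γ₂) → (Γ₁ × Γ₂) → ℝ :=
  fun x s => B₁ v.1 (fun i => (cocycle ψ₁ R₁ x.1 s.1 i : ℝ)) +
    B₂ v.2 (fun i => (cocycle ψ₂ R₂ x.2 s.2 i : ℝ))

end

section RepSystem

variable {G : Type*} [Group G] {Λ : Subgroup G} {H : Type*} [Group H] {Λ' : Subgroup H}

theorem RepSystem.rep_rep_mul (R : RepSystem Λ) (x s : G) :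
    R.rep (R.rep x * s) = R.rep (x * s) := by
  rw [← R.rep_coset (R.rep x * s) (x * (R.rep x)⁻¹) (R.rep_spec x)]
  congr 1
  group

theorem RepSystem.rep_mul_mul_inv (R : RepSystem Λ) {x : G} (hx : x ∈ R.Δ) (s : G) :
    R.rep (R.rep (x * s) * s⁻¹) = x := by
  rw [R.rep_rep_mul, mul_inv_cancel_right, R.rep_idem x hx]

theorem RepSystem.rep_mul_inv_mul (R : RepSystem Λ) {x : G} (hx : x ∈ R.Δ) (s : G) :
    R.rep (R.rep (x * s⁻¹) * s) = x := by
  rw [R.rep_rep_mul, inv_mul_cancel_right, R.rep_idem x hx]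

theorem RepSystem.sum_rep {M : Type*} [AddCommMonoid M] (R : RepSystem Λ) (f : G → M) (s : G) :
    ∑ x ∈ R.Δ, f (R.rep (x * s)) = ∑ x ∈ R.Δ, f x :=
  Finset.sum_nbij' (fun x => R.rep (x * s)) (fun x => R.rep (x * s⁻¹))
    (fun _ _ => R.rep_mem _) (fun _ _ => R.rep_mem _)
    (fun _ hx => R.rep_mul_mul_inv hx s) (fun _ hx => R.rep_mul_inv_mul hx s) (fun _ _ => rfl)

theorem RepSystem.sum_dd (R : RepSystem Λ) (f : G → ℝ) (s : G) :
    ∑ x ∈ R.Δ, dd R f x s = 0 := by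
  simp [dd, R.sum_rep f s]

theorem RepSystem.card_pos (R : RepSystem Λ) : 0 < R.Δ.card :=
  Finset.card_pos.mpr ⟨1, R.one_mem⟩

theorem RepSystem.bijective_mk (R : RepSystem Λ) (hN : Λ.Normal) :
    Function.Bijective (fun x : R.Δ => (QuotientGroup.mk (x : G) : G ⧸ Λ)) := by
  constructor
  · rintro ⟨x, hx⟩ ⟨y, hy⟩ h
    have h' : y * x⁻¹ ∈ Λ := hN.mem_comm (QuotientGroup.eq.mp h)
    have := R.rep_coset x _ h'
    rw [inv_mul_cancel_right, R.rep_idem x hx, R.rep_idem y hy] at this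
    exact Subtype.ext this.symm
  · intro q
    obtain ⟨g, rfl⟩ := QuotientGroup.mk_surjective q
    exact ⟨⟨R.rep g, R.rep_mem g⟩,
      QuotientGroup.eq.mpr (hN.mem_comm (R.rep_spec g))⟩

theorem RepSystem.card_eq_index (R : RepSystem Λ) (hN : Λ.Normal) : R.Δ.card = Λ.index := by
  rw [Subgroup.index, ← Nat.card_eq_of_bijective _ (R.bijective_mk hN)]
  simp

/-- `π` maps the random walk `(R, μ)` onto `(R', μ')`, with all fibres over representatives of
size `N`. -/
structure Covers (R : RepSystem Λ) (μ : G → ℝ) (R' : RepSystem Λ') (μ' : H → ℝ) (π : G →* H)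
    (N : ℕ) : Prop where
  rep : ∀ x, R'.rep (π x) = π (R.rep x)
  card_fiber : ∀ y ∈ R'.Δ, (R.Δ.filter (fun x => π x = y)).card = N
  index : Λ.index = N * Λ'.index
  ne_zero : N ≠ 0
  hasSum : ∀ (F : H → ℝ) (a : ℝ),
    HasSum (fun s => μ s * F (π s)) a → HasSum (fun t => μ' t * F t) a

namespace Covers

variable {R : RepSystem Λ} {μ : G → ℝ} {R' : RepSystem Λ'} {μ' : H → ℝ} {π : G →* H} {N : ℕ}

theorem map_mem (hC : Covers R μ R' μ' π N) {x : G} (hx : x ∈ R.Δ) : π x ∈ R'.Δ := by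
  rw [← R.rep_idem x hx, ← hC.rep]
  exact R'.rep_mem _

theorem exists_fiber (hC : Covers R μ R' μ' π N) {y : H} (hy : y ∈ R'.Δ) :
    ∃ x ∈ R.Δ, π x = y := by
  have h : 0 < (R.Δ.filter (fun x => π x = y)).card := by
    rw [hC.card_fiber y hy]
    exact Nat.pos_of_ne_zero hC.ne_zero
  obtain ⟨x, hx⟩ := Finset.card_pos.mp h
  exact ⟨x, Finset.mem_filter.mp hx⟩

theorem sum_comp {M : Type*} [AddCommMonoid M] (hC : Covers R μ R' μ' π N) (F : H → M) :
    ∑ x ∈ R.Δ, F (π x) = N • ∑ y ∈ R'.Δ, F y := by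
  rw [← Finset.sum_fiberwise_of_maps_to (fun x hx => hC.map_mem hx), Finset.smul_sum]
  refine Finset.sum_congr rfl fun y hy => ?_
  rw [← hC.card_fiber y hy, ← Finset.sum_const]
  exact Finset.sum_congr rfl fun x hx => by rw [(Finset.mem_filter.mp hx).2]

theorem sum_fiber_rep (hC : Covers R μ R' μ' π N) (f : G → ℝ) {y : H} (hy : y ∈ R'.Δ) (s : G) :
    ∑ x ∈ R.Δ with π x = y, f (R.rep (x * s)) =
      ∑ x ∈ R.Δ with π x = R'.rep (y * π s), f x := by
  refine Finset.sum_nbij' (fun x => R.rep (x * s)) (fun x => R.rep (x * s⁻¹)) ?_ ?_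
    (fun x hx => R.rep_mul_mul_inv (Finset.mem_filter.mp hx).1 s)
    (fun x hx => R.rep_mul_inv_mul (Finset.mem_filter.mp hx).1 s) (fun _ _ => rfl)
  · intro x hx
    refine Finset.mem_filter.mpr ⟨R.rep_mem _, ?_⟩
    rw [← hC.rep, map_mul, (Finset.mem_filter.mp hx).2]
  · intro x hx
    refine Finset.mem_filter.mpr ⟨R.rep_mem _, ?_⟩
    rw [← hC.rep, map_mul, (Finset.mem_filter.mp hx).2, map_inv, R'.rep_mul_mul_inv hy]

end Covers

end RepSystem

section Harmonic

variable {G : Type*} [Group G] {Λ : Subgroup G} {H : Type*} [Group H] {Λ' : Subgroup H}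
  {R : RepSystem Λ} {μ : G → ℝ} {R' : RepSystem Λ'} {μ' : H → ℝ} {π : G →* H} {N : ℕ}

theorem SqInt.summable_sq (hI : Λ.index ≠ 0) {u : G → G → ℝ} (hu : SqInt R μ u) {x : G}
    (hx : x ∈ R.Δ) : Summable (fun s => μ s * u x s ^ 2) := by
  have hI' : (Λ.index : ℝ) ≠ 0 := Nat.cast_ne_zero.mpr hI
  refine ((hu x hx).mul_left (Λ.index : ℝ)).congr fun s => ?_
  field_simp

theorem SqInt.summable_mul (hI : Λ.index ≠ 0) (hμ : ∀ g, 0 ≤ μ g) {u u' : G → G → ℝ}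
    (hu : SqInt R μ u) (hu' : SqInt R μ u') {x : G} (hx : x ∈ R.Δ) :
    Summable (fun s => μ s * (u x s * u' x s)) := by
  refine Summable.of_norm_bounded ((hu.summable_sq hI hx).add (hu'.summable_sq hI hx))
    fun s => ?_
  rw [norm_mul, Real.norm_of_nonneg (hμ s), ← mul_add]
  refine mul_le_mul_of_nonneg_left ?_ (hμ s)
  rw [Real.norm_eq_abs, abs_le]
  constructor <;> nlinarith [sq_nonneg (u x s + u' x s), sq_nonneg (u x s - u' x s),
    sq_nonneg (u x s), sq_nonneg (u' x s)]

theorem SqInt.summable (hI : Λ.index ≠ 0) (hμ : IsProb μ) {u : G → G → ℝ}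
    (hu : SqInt R μ u) {x : G} (hx : x ∈ R.Δ) : Summable (fun s => μ s * u x s) := by
  have h1 : SqInt R μ (fun _ _ => 1) := fun x _ => by
    simpa using hμ.2.summable.div_const _
  simpa using SqInt.summable_mul hI hμ.1 hu h1 hx

theorem Harmonic.hasSum (hI : Λ.index ≠ 0) (hμ : IsProb μ) {u : G → G → ℝ}
    (hu : Harmonic R μ u) {x : G} (hx : x ∈ R.Δ) :
    HasSum (fun s => μ s * u x s) (chi R μ u) := by
  rw [← hu.2 x hx]
  exact (hu.1.summable hI hμ hx).hasSum

/-- Maximum principle: functions harmonic for the induced walk on representatives are constant. -/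
theorem eq_of_hasSum_dd_zero (hμ : IsProb μ) (hnd : Nondeg μ) {h : G → ℝ}
    (hh : ∀ x ∈ R.Δ, HasSum (fun s => μ s * dd R h x s) 0) :
    ∀ x ∈ R.Δ, ∀ y ∈ R.Δ, h x = h y := by
  obtain ⟨z, hz, hmax⟩ := Finset.exists_max_image R.Δ h ⟨1, R.one_mem⟩
  have key : ∀ g : G, ∀ x ∈ R.Δ, h x = h z → h (R.rep (x * g)) = h z := by
    intro g
    induction hnd g using Subsemigroup.closure_induction with
    | mem s hs =>
      intro x hx hxz
      have h0 : HasSum (fun s => -(μ s * dd R h x s)) 0 := by simpa using (hh x hx).neg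
      have hnn : ∀ s, 0 ≤ -(μ s * dd R h x s) := fun s => by
        have := hmax _ (R.rep_mem (x * s))
        have h1 : dd R h x s ≤ 0 := by simp only [dd]; linarith
        nlinarith [hμ.1 s]
      have := congrFun ((hasSum_zero_iff_of_nonneg hnn).mp h0) s
      have hs' : μ s ≠ 0 := ne_of_gt hs
      simp only [Pi.zero_apply, neg_eq_zero, mul_eq_zero, hs', false_or, dd] at this
      linarith
    | mul a b _ _ ha hb =>
      intro x hx hxz
      rw [← mul_assoc, ← R.rep_rep_mul]
      exact hb _ (R.rep_mem _) (ha x hx hxz)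
  have hc : ∀ y ∈ R.Δ, h y = h z := fun y hy => by
    have := key (z⁻¹ * y) z hz rfl
    rwa [mul_inv_cancel_left, R.rep_idem y hy] at this
  intro x hx y hy
  rw [hc x hx, hc y hy]

/-- Uniqueness of the harmonic part. -/
theorem harmonic_part_unique (hμ : IsProb μ) (hnd : Nondeg μ) {u u' : G → G → ℝ} {f f' : G → ℝ}
    {c c' : ℝ} (hu : ∀ x ∈ R.Δ, HasSum (fun s => μ s * u x s) c)
    (hu' : ∀ x ∈ R.Δ, HasSum (fun s => μ s * u' x s) c')
    (h : ∀ x ∈ R.Δ, ∀ s, u x s + dd R f x s = u' x s + dd R f' x s) :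
    ∀ x ∈ R.Δ, ∀ s, u x s = u' x s := by
  have hd : ∀ x ∈ R.Δ, ∀ s, u x s - u' x s = dd R (fun z => f' z - f z) x s := fun x hx s => by
    have := h x hx s
    simp only [dd] at this ⊢
    linarith
  have hsum : ∀ x ∈ R.Δ, HasSum (fun s => μ s * dd R (fun z => f' z - f z) x s) (c - c') :=
    fun x hx => by
      refine ((hu x hx).sub (hu' x hx)).congr_fun fun s => ?_
      rw [← hd x hx s]
      ring
  have hcc : c - c' = 0 := by
    have h1 := hasSum_sum hsum
    simp only [← Finset.mul_sum, R.sum_dd, mul_zero, Finset.sum_const, nsmul_eq_mul] at h1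
    have h2 := h1.unique hasSum_zero
    exact (mul_eq_zero.mp h2).resolve_left (Nat.cast_ne_zero.mpr R.card_pos.ne')
  rw [hcc] at hsum
  intro x hx s
  have := eq_of_hasSum_dd_zero hμ hnd hsum _ (R.rep_mem (x * s)) x hx
  have h2 := hd x hx s
  simp only [dd] at h2 this
  linarith

/-- The harmonic part of a form pulled back along a covering is a pull-back. -/
theorem Covers.exists_harmonic_part_eq (hC : Covers R μ R' μ' π N) (hI : Λ.index ≠ 0)
    (hμ : IsProb μ) (hnd : Nondeg μ) {W u : G → G → ℝ} {f : G → ℝ} {ω : H → H → ℝ}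
    (hW : ∀ x s, W x s = ω (π x) (π s)) (hu : IsHarmDecomp R μ W u f) :
    ∃ g : H → ℝ, ∀ x ∈ R.Δ, ∀ s, u x s = ω (π x) (π s) - dd R' g (π x) (π s) := by
  have hN : (N : ℝ) ≠ 0 := Nat.cast_ne_zero.mpr hC.ne_zero
  set g : H → ℝ := fun y => (N : ℝ)⁻¹ * ∑ x ∈ R.Δ with π x = y, f x with hg
  have havg : ∀ x ∈ R.Δ, ∀ s, ω (π x) (π s) - dd R' g (π x) (π s) =
      (N : ℝ)⁻¹ * ∑ z ∈ R.Δ with π z = π x, u z s := fun x hx s => by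
    have h1 : ∀ z ∈ R.Δ.filter (fun z => π z = π x),
        u z s = ω (π x) (π s) - (f (R.rep (z * s)) - f z) := fun z hz => by
      obtain ⟨hz1, hz2⟩ := Finset.mem_filter.mp hz
      have := hu.2.2 z hz1 s
      rw [hW, hz2] at this
      simp only [dd] at this
      linarith
    rw [Finset.sum_congr rfl h1, Finset.sum_sub_distrib, Finset.sum_sub_distrib,
      hC.sum_fiber_rep f (hC.map_mem hx), Finset.sum_const, hC.card_fiber _ (hC.map_mem hx)]
    simp only [dd, hg, nsmul_eq_mul]
    field_simp
  refine ⟨g, harmonic_part_unique (f := f) (f' := fun x => g (π x)) hμ hnd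
    (fun x hx => hu.2.1.hasSum hI hμ hx) (c' := chi R μ u) (fun x hx => ?_) (fun x hx s => ?_)⟩
  · have h1 := (hasSum_sum (s := R.Δ.filter (fun z => π z = π x))
      (fun z hz => hu.2.1.hasSum hI hμ (Finset.mem_filter.mp hz).1)).mul_left (N : ℝ)⁻¹
    rw [Finset.sum_const, hC.card_fiber _ (hC.map_mem hx), nsmul_eq_mul,
      inv_mul_cancel_left₀ hN] at h1
    refine h1.congr_fun fun s => ?_
    rw [havg x hx s, ← Finset.mul_sum]
    ring
  · rw [← hu.2.2 x hx s, hW]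
    simp only [dd, ← hC.rep, map_mul]
    ring

theorem Covers.sum_tsum_eq (hC : Covers R μ R' μ' π N) {k : H → H → ℝ}
    (hk : ∀ x ∈ R.Δ, Summable (fun s => μ s * k (π x) (π s))) :
    ∑ x ∈ R.Δ, ∑' s, μ s / (Λ.index : ℝ) * k (π x) (π s) =
      ∑ y ∈ R'.Δ, ∑' t, μ' t / (Λ'.index : ℝ) * k y t := by
  have hN : (N : ℝ) ≠ 0 := Nat.cast_ne_zero.mpr hC.ne_zero
  have h1 : ∀ x ∈ R.Δ, ∑' s, μ s / (Λ.index : ℝ) * k (π x) (π s) =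
      (Λ.index : ℝ)⁻¹ * ∑' t, μ' t * k (π x) t := fun x hx => by
    rw [(hC.hasSum (k (π x)) _ (hk x hx).hasSum).tsum_eq, ← tsum_mul_left]
    exact tsum_congr fun s => by ring
  rw [Finset.sum_congr rfl h1,
    hC.sum_comp (fun y => (Λ.index : ℝ)⁻¹ * ∑' t, μ' t * k y t), nsmul_eq_mul, Finset.mul_sum]
  refine Finset.sum_congr rfl fun y _ => ?_
  rw [hC.index, Nat.cast_mul, mul_inv, ← mul_assoc, mul_inv_cancel_left₀ hN, ← tsum_mul_left]
  exact tsum_congr fun s => by ring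

theorem Covers.isProb (hC : Covers R μ R' μ' π N) (hμ : IsProb μ) (hμ' : ∀ t, 0 ≤ μ' t) :
    IsProb μ' :=
  ⟨hμ', by simpa using hC.hasSum (fun _ => 1) 1 (by simpa using hμ.2)⟩

theorem Covers.chi_eq (hC : Covers R μ R' μ' π N) (hI : Λ.index ≠ 0) (hμ : IsProb μ)
    {u : G → G → ℝ} {a : H → H → ℝ} (hu : SqInt R μ u)
    (hua : ∀ x ∈ R.Δ, ∀ s, u x s = a (π x) (π s)) : chi R μ u = chi R' μ' a := by
  rw [chi, chi, ← hC.sum_tsum_eq (k := a)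
    (fun x hx => (hu.summable hI hμ hx).congr fun s => by rw [hua x hx])]
  exact Finset.sum_congr rfl fun x hx => tsum_congr fun s => by rw [hua x hx]

/-- A covering does not change the covariance pairing of harmonic parts. -/
theorem Covers.cov_eq (hC : Covers R μ R' μ' π N) (hI : Λ.index ≠ 0) (hI' : Λ'.index ≠ 0)
    (hμ : IsProb μ) (hnd : Nondeg μ) (hμ' : IsProb μ') (hnd' : Nondeg μ')
    {W W' u u' : G → G → ℝ} {f f' : G → ℝ} {ω ω' w w' : H → H → ℝ} {g g' : H → ℝ}
    (hW : ∀ x s, W x s = ω (π x) (π s)) (hW' : ∀ x s, W' x s = ω' (π x) (π s))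
    (hu : IsHarmDecomp R μ W u f) (hu' : IsHarmDecomp R μ W' u' f')
    (hw : IsHarmDecomp R' μ' ω w g) (hw' : IsHarmDecomp R' μ' ω' w' g') :
    cov R μ u u' = cov R' μ' w w' := by
  have key : ∀ {W u : G → G → ℝ} {f : G → ℝ} {ω w : H → H → ℝ} {g : H → ℝ},
      (∀ x s, W x s = ω (π x) (π s)) → IsHarmDecomp R μ W u f → IsHarmDecomp R' μ' ω w g →
      ∀ x ∈ R.Δ, ∀ s, u x s = w (π x) (π s) := by
    intro W u f ω w g hW hu hw
    obtain ⟨p, hp⟩ := hC.exists_harmonic_part_eq hI hμ hnd hW hu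
    have h1 := harmonic_part_unique (R := R') (u := fun y t => ω y t - dd R' p y t) (u' := w)
      (f := p) (f' := g) hμ' hnd' (c := chi R μ u) (fun y hy => ?_)
      (fun y hy => hw.2.1.hasSum hI' hμ' hy) (fun y hy t => ?_)
    · intro x hx s
      rw [hp x hx s, ← h1 (π x) (hC.map_mem hx)]
    · obtain ⟨x, hx, rfl⟩ := hC.exists_fiber hy
      exact hC.hasSum (fun t => ω (π x) t - dd R' p (π x) t) _
        ((hu.2.1.hasSum hI hμ hx).congr_fun fun s => by rw [hp x hx s])
    · rw [hw.2.2 y hy t]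
      ring
  have h := key hW hu hw
  have h' := key hW' hu' hw'
  rw [cov, cov, hC.chi_eq hI hμ hu.2.1.1 h, hC.chi_eq hI hμ hu'.2.1.1 h',
    ← hC.sum_tsum_eq (k := fun y t => w y t * w' y t) (fun x hx =>
      (hu.2.1.1.summable_mul hI hμ.1 hu'.2.1.1 hx).congr fun s => by rw [h x hx, h' x hx])]
  congr 1
  exact Finset.sum_congr rfl fun x hx => tsum_congr fun s => by rw [h x hx, h' x hx]

theorem sum_tsum_eq_zero {k : G → G → ℝ} (hk : ∀ x ∈ R.Δ, Summable (fun s => μ s * k x s))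
    (h0 : ∀ s, ∑ x ∈ R.Δ, k x s = 0) :
    ∑ x ∈ R.Δ, ∑' s, μ s / (Λ.index : ℝ) * k x s = 0 := by
  rw [← Summable.tsum_finsetSum fun x hx =>
    ((hk x hx).div_const (Λ.index : ℝ)).congr fun s => by ring]
  simp [← Finset.mul_sum, h0]

theorem cov_eq_zero (hI : Λ.index ≠ 0) (hμ : IsProb μ) {u u' : G → G → ℝ} (hu : SqInt R μ u)
    (hu' : SqInt R μ u') (h : ∀ s, ∑ x ∈ R.Δ, u x s * u' x s = 0)
    (hχ : (∀ s, ∑ x ∈ R.Δ, u x s = 0) ∨ ∀ s, ∑ x ∈ R.Δ, u' x s = 0) : cov R μ u u' = 0 := by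
  rw [cov, sum_tsum_eq_zero (k := fun x s => u x s * u' x s)
    (fun x hx => hu.summable_mul hI hμ.1 hu' hx) h, chi, chi]
  rcases hχ with hχ | hχ
  · rw [sum_tsum_eq_zero (fun x hx => hu.summable hI hμ hx) hχ]
    ring
  · rw [sum_tsum_eq_zero (fun x hx => hu'.summable hI hμ hx) hχ]
    ring

end Harmonic

section Transfer

variable {G : Type*} [Group G] {H : Type*} [Group H] {Λ : Subgroup H} {m : ℕ}
  (ψ : Λ ≃* Multiplicative (Fin m → ℤ)) (R : RepSystem Λ)

theorem cocycle_mul (x s t : H) :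
    cocycle ψ R x (s * t) = cocycle ψ R x s + cocycle ψ R (R.rep (x * s)) t := by
  rw [cocycle, cocycle, cocycle, ← toAdd_mul, ← map_mul]
  congr 2
  refine Subtype.ext ?_
  simp only [Subgroup.coe_mul, R.rep_rep_mul, ← mul_assoc]
  group

theorem cocycle_one {x : H} (hx : x ∈ R.Δ) : cocycle ψ R x 1 = 0 := by
  have : (⟨x * 1 * (R.rep (x * 1))⁻¹, R.rep_spec (x * 1)⟩ : Λ) = 1 :=
    Subtype.ext (by simp [R.rep_idem x hx])
  rw [cocycle, this, map_one, toAdd_one]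

theorem transfer_mul (s t : H) : transfer ψ R (s * t) = transfer ψ R s + transfer ψ R t := by
  simp only [transfer, cocycle_mul, Finset.sum_add_distrib]
  rw [R.sum_rep (fun x => cocycle ψ R x t) s]

theorem transfer_pow (s : H) (n : ℕ) : transfer ψ R (s ^ n) = n • transfer ψ R s := by
  induction n with
  | zero =>
    rw [pow_zero, zero_smul]
    exact Finset.sum_eq_zero fun x hx => cocycle_one ψ R hx
  | succ n ih => rw [pow_succ, transfer_mul, ih, succ_nsmul]

theorem cocycle_of_mem (hN : Λ.Normal) {x : H} (hx : x ∈ R.Δ) (l : Λ) :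
    cocycle ψ R x l = Multiplicative.toAdd
      (ψ ⟨x * (l : H) * x⁻¹, hN.conj_mem (l : H) l.2 x⟩) := by
  have h : R.rep (x * l) = x := by
    have := R.rep_coset x _ (hN.conj_mem (l : H) l.2 x)
    rwa [inv_mul_cancel_right, R.rep_idem x hx] at this
  rw [cocycle]
  congr 2
  exact Subtype.ext (by simp [h])

theorem sum_cocycle_cast (s : H) :
    ∑ x ∈ R.Δ, (fun i => (cocycle ψ R x s i : ℝ)) = fun i => (transfer ψ R s i : ℝ) := by
  ext i
  simp [transfer, Finset.sum_apply]

variable {ψ R}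

theorem transfer_mem_range (hN : Λ.Normal) (hI : Λ.index ≠ 0)
    {Ad : H ⧸ Λ → (Fin m → ℝ) →ₗ[ℝ] (Fin m → ℝ)}
    (hAd : ∀ (x : H) (lam : Λ),
        Ad (QuotientGroup.mk x) (fun i => (Multiplicative.toAdd (ψ lam) i : ℝ)) =
          fun i => (Multiplicative.toAdd
            (ψ ⟨x * (lam : H) * x⁻¹, hN.conj_mem (lam : H) lam.2 x⟩) i : ℝ))
    {T : (Fin m → ℝ) →ₗ[ℝ] (Fin m → ℝ)}
    (hT : ∀ v, T v = (Λ.index : ℝ)⁻¹ • ∑' f : H ⧸ Λ, Ad f v) (s : H) :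
    (fun i => (transfer ψ R s i : ℝ)) ∈ LinearMap.range T := by
  have hI' : (Λ.index : ℝ) ≠ 0 := Nat.cast_ne_zero.mpr hI
  have hmem : ∀ l : Λ, (fun i => (transfer ψ R l i : ℝ)) ∈ LinearMap.range T := fun l => by
    refine ⟨(Λ.index : ℝ) • fun i => (Multiplicative.toAdd (ψ l) i : ℝ), ?_⟩
    rw [map_smul, hT, smul_inv_smul₀ hI',
      ← (Equiv.ofBijective _ (R.bijective_mk hN)).tsum_eq, tsum_fintype, ← sum_cocycle_cast,
      ← Finset.sum_coe_sort R.Δ]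
    refine Finset.sum_congr rfl fun x _ => ?_
    rw [cocycle_of_mem ψ R hN x.2 l, ← hAd]
    rfl
  have h1 := hmem ⟨s ^ Λ.index, Subgroup.pow_index_mem Λ s⟩
  have h2 : (fun i => (transfer ψ R s i : ℝ)) =
      (Λ.index : ℝ)⁻¹ • fun i => (transfer ψ R (s ^ Λ.index) i : ℝ) := by
    ext i
    simp [transfer_pow, hI']
  rw [h2]
  exact Submodule.smul_mem _ _ h1

variable (ψ R)

theorem abs_cocycle_list_le (π : G →* H) (S₀ : Finset G) (i : Fin m) (l : List G)
    (hl : ∀ s ∈ l, s ∈ S₀) {x : H} (hx : x ∈ R.Δ) :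
    |(cocycle ψ R x (π l.prod) i : ℝ)| ≤
      (∑ y ∈ R.Δ, ∑ t ∈ S₀, |(cocycle ψ R y (π t) i : ℝ)|) * l.length := by
  induction l generalizing x with
  | nil => simp [cocycle_one ψ R hx]
  | cons a l ih =>
    have h1 := ih (fun s hs => hl s (List.mem_cons_of_mem _ hs)) (R.rep_mem (x * π a))
    have h2 : |(cocycle ψ R x (π a) i : ℝ)| ≤
        ∑ y ∈ R.Δ, ∑ t ∈ S₀, |(cocycle ψ R y (π t) i : ℝ)| :=
      (Finset.single_le_sum (f := fun t => |(cocycle ψ R x (π t) i : ℝ)|)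
        (fun _ _ => abs_nonneg _) (hl a List.mem_cons_self)).trans
      (Finset.single_le_sum (f := fun y => ∑ t ∈ S₀, |(cocycle ψ R y (π t) i : ℝ)|)
        (fun _ _ => Finset.sum_nonneg fun _ _ => abs_nonneg _) hx)
    rw [List.prod_cons, map_mul, cocycle_mul, Pi.add_apply, Int.cast_add, List.length_cons,
      Nat.cast_succ]
    refine (abs_add_le _ _).trans ?_
    linarith

theorem exists_list_wordLength {S₀ : Finset G} (hsymm : ∀ s ∈ S₀, s⁻¹ ∈ S₀)
    (hgen : Subgroup.closure (S₀ : Set G) = ⊤) (g : G) :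
    ∃ l : List G, (∀ s ∈ l, s ∈ S₀) ∧ l.length = wordLength S₀ g ∧ l.prod = g := by
  refine Nat.sInf_mem (s := {n : ℕ | ∃ l : List G, (∀ s ∈ l, s ∈ S₀) ∧ l.length = n ∧
    l.prod = g}) ?_
  have hg : g ∈ Submonoid.closure ((S₀ : Set G) ∪ (S₀ : Set G)⁻¹) := by
    rw [← Subgroup.closure_toSubmonoid, hgen]
    trivial
  obtain ⟨l, hl, hp⟩ := Submonoid.exists_list_of_mem_closure hg
  refine ⟨l.length, l, fun s hs => ?_, rfl, hp⟩
  rcases hl s hs with h | h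
  · exact h
  · simpa using hsymm _ h

theorem summable_cocycle {μ : G → ℝ} (hμ : ∀ g, 0 ≤ μ g) (hmom : FinSecondMoment μ)
    (π : G →* H) (i : Fin m) {x : H} (hx : x ∈ R.Δ) :
    Summable (fun s => μ s * (cocycle ψ R x (π s) i : ℝ)) := by
  obtain ⟨S₀, hsymm, hgen, hs⟩ := hmom
  set C := ∑ y ∈ R.Δ, ∑ t ∈ S₀, |(cocycle ψ R y (π t) i : ℝ)| with hC
  refine Summable.of_norm_bounded (hs.mul_left C) fun s => ?_
  obtain ⟨l, hl, hlen, hp⟩ := exists_list_wordLength hsymm hgen s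
  have h1 := abs_cocycle_list_le ψ R π S₀ i l hl hx
  rw [hp, hlen, ← hC] at h1
  have hC0 : 0 ≤ C := Finset.sum_nonneg fun _ _ => Finset.sum_nonneg fun _ _ => abs_nonneg _
  have h2 : (wordLength S₀ s : ℝ) ≤ (wordLength S₀ s : ℝ) ^ 2 := by
    exact_mod_cast Nat.le_self_pow two_ne_zero _
  rw [norm_mul, Real.norm_of_nonneg (hμ s), Real.norm_eq_abs]
  calc μ s * |(cocycle ψ R x (π s) i : ℝ)| ≤ μ s * (C * (wordLength S₀ s : ℝ) ^ 2) :=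
        mul_le_mul_of_nonneg_left (h1.trans (mul_le_mul_of_nonneg_left h2 hC0)) (hμ s)
    _ = C * ((wordLength S₀ s : ℝ) ^ 2 * μ s) := by ring

variable {ψ R}

theorem Covers.drift_mem {Λ₀ : Subgroup G} {R₀ : RepSystem Λ₀} {μ : G → ℝ} {μ' : H → ℝ}
    {π : G →* H} {N : ℕ} (hC : Covers R₀ μ R μ' π N) (hμ : ∀ g, 0 ≤ μ g)
    (hmom : FinSecondMoment μ) {V : Submodule ℝ (Fin m → ℝ)}
    (hV : ∀ s : H, (fun i => (transfer ψ R s i : ℝ)) ∈ V) :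
    (fun i => ∑ x ∈ R₀.Δ, ∑' s, μ s / (Λ₀.index : ℝ) * (cocycle ψ R (π x) (π s) i : ℝ)) ∈ V := by
  have h1 : HasSum (fun s => (μ s / (Λ₀.index : ℝ) * N) • fun i => (transfer ψ R (π s) i : ℝ))
      (fun i => ∑ x ∈ R₀.Δ, ∑' s, μ s / (Λ₀.index : ℝ) * (cocycle ψ R (π x) (π s) i : ℝ)) := by
    refine Pi.hasSum.mpr fun i => ?_
    refine (hasSum_sum (f := fun x s => μ s / (Λ₀.index : ℝ) * (cocycle ψ R (π x) (π s) i : ℝ))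
      fun x hx => Summable.hasSum ?_).congr_fun fun s => ?_
    · exact ((summable_cocycle ψ R hμ hmom π i (hC.map_mem hx)).div_const
        (Λ₀.index : ℝ)).congr fun s => by ring
    · rw [← Finset.mul_sum, hC.sum_comp (fun y => (cocycle ψ R y (π s) i : ℝ))]
      simp [transfer, Finset.sum_apply, mul_assoc]
  rw [← h1.tsum_eq]
  exact tsum_mem (s := V) V.closed_of_finiteDimensional fun s => V.smul_mem _ (hV _)

/-- The part `B(v, ·) ∘ α - dg` sums to zero over representatives when `v` annihilates the
values of the transfer homomorphism. -/
theorem sum_vhatB_sub_dd {B : (Fin m → ℝ) →ₗ[ℝ] (Fin m → ℝ) →ₗ[ℝ] ℝ} {v : Fin m → ℝ}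
    (hv : ∀ s : H, B v (fun i => (transfer ψ R s i : ℝ)) = 0) (g : H → ℝ) (s : H) :
    ∑ x ∈ R.Δ, (vhatB ψ R B v x s - dd R g x s) = 0 := by
  simp only [Finset.sum_sub_distrib, R.sum_dd, vhatB, ← map_sum, sum_cocycle_cast, hv, sub_zero]

end Transfer

section Marginals

variable {X Y : Type*} {ν : X × Y → ℝ}

theorem hasSum_marg1 (hν : Summable ν) (F : X → ℝ) (a : ℝ)
    (h : HasSum (fun s => ν s * F s.1) a) : HasSum (fun t => marg1 ν t * F t) a :=
  h.prod_fiberwise fun t => (hν.prod_factor t).hasSum.mul_right (F t)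

theorem marg2_eq_marg1_swap (ν : X × Y → ℝ) : marg2 ν = marg1 (fun p => ν p.swap) := rfl

theorem hasSum_marg2 (hν : Summable ν) (F : Y → ℝ) (a : ℝ)
    (h : HasSum (fun s => ν s * F s.2) a) : HasSum (fun t => marg2 ν t * F t) a := by
  rw [marg2_eq_marg1_swap]
  exact hasSum_marg1 hν.prod_symm F a ((Equiv.prodComm Y X).hasSum_iff.mpr h)

theorem marg1_nonneg (hν : ∀ p, 0 ≤ ν p) (t : X) : 0 ≤ marg1 ν t :=
  tsum_nonneg fun _ => hν _

theorem marg2_nonneg (hν : ∀ p, 0 ≤ ν p) (t : Y) : 0 ≤ marg2 ν t :=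
  tsum_nonneg fun _ => hν _

end Marginals

section Product

variable {Γ₁ : Type*} [Group Γ₁] {Γ₂ : Type*} [Group Γ₂] {Λ₁ : Subgroup Γ₁} {Λ₂ : Subgroup Γ₂}
  {ν : Γ₁ × Γ₂ → ℝ}

theorem nondeg_map {G H : Type*} [Group G] [Group H] {μ : G → ℝ} {μ' : H → ℝ} (π : G →* H)
    (hπ : Function.Surjective π) (hpos : ∀ g, 0 < μ g → 0 < μ' (π g)) (h : Nondeg μ) :
    Nondeg μ' := by
  intro y
  obtain ⟨x, rfl⟩ := hπ y
  induction h x using Subsemigroup.closure_induction with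
  | mem s hs => exact Subsemigroup.subset_closure (hpos s hs)
  | mul a b _ _ ha hb =>
    rw [map_mul]
    exact Subsemigroup.mul_mem _ ha hb

theorem nondeg_marg1 (hν : IsProb ν) (hnd : Nondeg ν) : Nondeg (marg1 ν) :=
  nondeg_map (MonoidHom.fst Γ₁ Γ₂) Prod.fst_surjective
    (fun g hg => (hν.2.summable.prod_factor g.1).tsum_pos (fun _ => hν.1 _) g.2 hg) hnd

theorem nondeg_marg2 (hν : IsProb ν) (hnd : Nondeg ν) : Nondeg (marg2 ν) :=
  nondeg_map (MonoidHom.snd Γ₁ Γ₂) Prod.snd_surjective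
    (fun g hg => (hν.2.summable.prod_symm.prod_factor g.2).tsum_pos (fun _ => hν.1 _) g.1 hg) hnd

theorem covers_fst (hN₂ : Λ₂.Normal) (hI₂ : Λ₂.index ≠ 0) (R₁ : RepSystem Λ₁)
    (R₂ : RepSystem Λ₂) (hν : Summable ν) :
    Covers (prodRep R₁ R₂) ν R₁ (marg1 ν) (MonoidHom.fst Γ₁ Γ₂) Λ₂.index where
  rep _ := rfl
  card_fiber y hy := by
    rw [← R₂.card_eq_index hN₂]
    have : (prodRep R₁ R₂).Δ.filter (fun x => MonoidHom.fst Γ₁ Γ₂ x = y) = {y} ×ˢ R₂.Δ := by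
      ext ⟨a, b⟩
      rw [Finset.mem_filter, Finset.mem_product, Finset.mem_singleton]
      refine ⟨fun ⟨hab, ha⟩ => ⟨ha, (Finset.mem_product.mp hab).2⟩, ?_⟩
      rintro ⟨rfl, hb⟩
      exact ⟨Finset.mem_product.mpr ⟨hy, hb⟩, rfl⟩
    rw [this, Finset.card_product, Finset.card_singleton, one_mul]
  index := by rw [Subgroup.index_prod, mul_comm]
  ne_zero := hI₂
  hasSum := hasSum_marg1 hν

theorem covers_snd (hN₁ : Λ₁.Normal) (hI₁ : Λ₁.index ≠ 0) (R₁ : RepSystem Λ₁)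
    (R₂ : RepSystem Λ₂) (hν : Summable ν) :
    Covers (prodRep R₁ R₂) ν R₂ (marg2 ν) (MonoidHom.snd Γ₁ Γ₂) Λ₁.index where
  rep _ := rfl
  card_fiber y hy := by
    rw [← R₁.card_eq_index hN₁]
    have : (prodRep R₁ R₂).Δ.filter (fun x => MonoidHom.snd Γ₁ Γ₂ x = y) = R₁.Δ ×ˢ {y} := by
      ext ⟨a, b⟩
      rw [Finset.mem_filter, Finset.mem_product, Finset.mem_singleton]
      refine ⟨fun ⟨hab, hb⟩ => ⟨(Finset.mem_product.mp hab).1, hb⟩, ?_⟩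
      rintro ⟨ha, rfl⟩
      exact ⟨Finset.mem_product.mpr ⟨ha, hy⟩, rfl⟩
    rw [this, Finset.card_product, Finset.card_singleton, mul_one]
  index := Subgroup.index_prod _ _
  ne_zero := hI₁
  hasSum := hasSum_marg2 hν

theorem cov_prod_eq_zero (hI : (Λ₁.prod Λ₂).index ≠ 0) (hν : IsProb ν) {R₁ : RepSystem Λ₁}
    {R₂ : RepSystem Λ₂} {u u' : Γ₁ × Γ₂ → Γ₁ × Γ₂ → ℝ} (hu : SqInt (prodRep R₁ R₂) ν u)
    (hu' : SqInt (prodRep R₁ R₂) ν u') {a : Γ₁ → Γ₁ → ℝ} {b : Γ₂ → Γ₂ → ℝ}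
    (ha : ∀ x ∈ (prodRep R₁ R₂).Δ, ∀ s, u x s = a x.1 s.1)
    (hb : ∀ x ∈ (prodRep R₁ R₂).Δ, ∀ s, u' x s = b x.2 s.2)
    (h0 : (∀ t, ∑ x ∈ R₁.Δ, a x t = 0) ∨ ∀ t, ∑ x ∈ R₂.Δ, b x t = 0) :
    cov (prodRep R₁ R₂) ν u u' = 0 := by
  refine cov_eq_zero hI hν hu hu' (fun s => ?_) ?_
  · rw [Finset.sum_congr rfl fun x hx => by rw [ha x hx, hb x hx]]
    change ∑ x ∈ R₁.Δ ×ˢ R₂.Δ, a x.1 s.1 * b x.2 s.2 = 0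
    simp only [Finset.sum_product, ← Finset.sum_mul_sum]
    rcases h0 with h0 | h0 <;> simp [h0]
  · refine h0.imp (fun h0 s => ?_) (fun h0 s => ?_)
    · rw [Finset.sum_congr rfl fun x hx => ha x hx s]
      change ∑ x ∈ R₁.Δ ×ˢ R₂.Δ, a x.1 s.1 = 0
      rw [Finset.sum_product_right]
      simp [h0]
    · rw [Finset.sum_congr rfl fun x hx => hb x hx s]
      change ∑ x ∈ R₁.Δ ×ˢ R₂.Δ, b x.2 s.2 = 0
      rw [Finset.sum_product]
      simp [h0]

end Product

/-- Structure theorem for the covariance of a coupled random walk on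
`Γ₁ × Γ₂`: the drift lies in `range θ̲₁ × range θ̲₂`, the diagonal blocks of the
covariance form are those of the marginals, and the off-diagonal block vanishes on
`(range θ̲₁)^⊥ × ℝ^{m₂}` and `ℝ^{m₁} × (range θ̲₂)^⊥`. -/
theorem structure_theorem_covariance
    {Γ₁ : Type*} [Group Γ₁] [Countable Γ₁] {Γ₂ : Type*} [Group Γ₂] [Countable Γ₂]
    {Λ₁ : Subgroup Γ₁} {Λ₂ : Subgroup Γ₂} (hN₁ : Λ₁.Normal) (hN₂ : Λ₂.Normal)
    (hI₁ : Λ₁.index ≠ 0) (hI₂ : Λ₂.index ≠ 0)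
    {m₁ m₂ : ℕ} (hm₁ : 1 ≤ m₁) (hm₂ : 1 ≤ m₂)
    (ψ₁ : Λ₁ ≃* Multiplicative (Fin m₁ → ℤ)) (ψ₂ : Λ₂ ≃* Multiplicative (Fin m₂ → ℤ))
    (R₁ : RepSystem Λ₁) (R₂ : RepSystem Λ₂)
    (Ad₁ : Γ₁ ⧸ Λ₁ → (Fin m₁ → ℝ) →ₗ[ℝ] (Fin m₁ → ℝ))
    (hAd₁ : ∀ (x : Γ₁) (lam : Λ₁),
        Ad₁ (QuotientGroup.mk x) (fun i => (Multiplicative.toAdd (ψ₁ lam) i : ℝ)) =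
          fun i => (Multiplicative.toAdd
            (ψ₁ ⟨x * (lam : Γ₁) * x⁻¹, hN₁.conj_mem (lam : Γ₁) lam.2 x⟩) i : ℝ))
    (Ad₂ : Γ₂ ⧸ Λ₂ → (Fin m₂ → ℝ) →ₗ[ℝ] (Fin m₂ → ℝ))
    (hAd₂ : ∀ (x : Γ₂) (lam : Λ₂),
        Ad₂ (QuotientGroup.mk x) (fun i => (Multiplicative.toAdd (ψ₂ lam) i : ℝ)) =
          fun i => (Multiplicative.toAdd
            (ψ₂ ⟨x * (lam : Γ₂) * x⁻¹, hN₂.conj_mem (lam : Γ₂) lam.2 x⟩) i : ℝ))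
    (B₁ : (Fin m₁ → ℝ) →ₗ[ℝ] (Fin m₁ → ℝ) →ₗ[ℝ] ℝ)
    (hB₁symm : ∀ u w, B₁ u w = B₁ w u) (hB₁pos : ∀ u, u ≠ 0 → 0 < B₁ u u)
    (hB₁inv : ∀ (f : Γ₁ ⧸ Λ₁) (u w), B₁ (Ad₁ f u) (Ad₁ f w) = B₁ u w)
    (B₂ : (Fin m₂ → ℝ) →ₗ[ℝ] (Fin m₂ → ℝ) →ₗ[ℝ] ℝ)
    (hB₂symm : ∀ u w, B₂ u w = B₂ w u) (hB₂pos : ∀ u, u ≠ 0 → 0 < B₂ u u)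
    (hB₂inv : ∀ (f : Γ₂ ⧸ Λ₂) (u w), B₂ (Ad₂ f u) (Ad₂ f w) = B₂ u w)
    (T₁ : (Fin m₁ → ℝ) →ₗ[ℝ] (Fin m₁ → ℝ))
    (hT₁ : ∀ v, T₁ v = (Λ₁.index : ℝ)⁻¹ • ∑' f : Γ₁ ⧸ Λ₁, Ad₁ f v)
    (T₂ : (Fin m₂ → ℝ) →ₗ[ℝ] (Fin m₂ → ℝ))
    (hT₂ : ∀ v, T₂ v = (Λ₂.index : ℝ)⁻¹ • ∑' f : Γ₂ ⧸ Λ₂, Ad₂ f v)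
    (ν : Γ₁ × Γ₂ → ℝ) (hν : IsProb ν) (hnd : Nondeg ν) (hmom : FinSecondMoment ν) :
    -- the marginals are non-degenerate
    Nondeg (marg1 ν) ∧ Nondeg (marg2 ν) ∧
    -- (i) the drift lies in range θ̲₁ × range θ̲₂
    ((fun i => ∑ x ∈ (prodRep R₁ R₂).Δ, ∑' s : Γ₁ × Γ₂,
        ν s / (((Λ₁.prod Λ₂).index : ℝ)) * (cocycle ψ₁ R₁ x.1 s.1 i : ℝ)) ∈
      LinearMap.range T₁) ∧
    ((fun i => ∑ x ∈ (prodRep R₁ R₂).Δ, ∑' s : Γ₁ × Γ₂,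
        ν s / (((Λ₁.prod Λ₂).index : ℝ)) * (cocycle ψ₂ R₂ x.2 s.2 i : ℝ)) ∈
      LinearMap.range T₂) ∧
    -- (ii) first diagonal block
    (∀ (v₁ v₁' : Fin m₁ → ℝ) (u u' : (Γ₁ × Γ₂) → (Γ₁ × Γ₂) → ℝ) (f f' : Γ₁ × Γ₂ → ℝ)
        (u₁ u₁' : Γ₁ → Γ₁ → ℝ) (g g' : Γ₁ → ℝ),
        IsHarmDecomp (prodRep R₁ R₂) ν (vhatB2 ψ₁ R₁ B₁ ψ₂ R₂ B₂ (v₁, 0)) u f →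
        IsHarmDecomp (prodRep R₁ R₂) ν (vhatB2 ψ₁ R₁ B₁ ψ₂ R₂ B₂ (v₁', 0)) u' f' →
        IsHarmDecomp R₁ (marg1 ν) (vhatB ψ₁ R₁ B₁ v₁) u₁ g →
        IsHarmDecomp R₁ (marg1 ν) (vhatB ψ₁ R₁ B₁ v₁') u₁' g' →
        cov (prodRep R₁ R₂) ν u u' = cov R₁ (marg1 ν) u₁ u₁') ∧
    -- (ii) second diagonal block
    (∀ (v₂ v₂' : Fin m₂ → ℝ) (u u' : (Γ₁ × Γ₂) → (Γ₁ × Γ₂) → ℝ) (f f' : Γ₁ × Γ₂ → ℝ)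
        (u₂ u₂' : Γ₂ → Γ₂ → ℝ) (g g' : Γ₂ → ℝ),
        IsHarmDecomp (prodRep R₁ R₂) ν (vhatB2 ψ₁ R₁ B₁ ψ₂ R₂ B₂ (0, v₂)) u f →
        IsHarmDecomp (prodRep R₁ R₂) ν (vhatB2 ψ₁ R₁ B₁ ψ₂ R₂ B₂ (0, v₂')) u' f' →
        IsHarmDecomp R₂ (marg2 ν) (vhatB ψ₂ R₂ B₂ v₂) u₂ g →
        IsHarmDecomp R₂ (marg2 ν) (vhatB ψ₂ R₂ B₂ v₂') u₂' g' →
        cov (prodRep R₁ R₂) ν u u' = cov R₂ (marg2 ν) u₂ u₂') ∧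
    -- (iii) off-diagonal vanishing
    (∀ (v₁ : Fin m₁ → ℝ) (v₂ : Fin m₂ → ℝ)
        (u u' : (Γ₁ × Γ₂) → (Γ₁ × Γ₂) → ℝ) (f f' : Γ₁ × Γ₂ → ℝ),
        ((∀ w ∈ LinearMap.range T₁, B₁ v₁ w = 0) ∨
          (∀ w ∈ LinearMap.range T₂, B₂ v₂ w = 0)) →
        IsHarmDecomp (prodRep R₁ R₂) ν (vhatB2 ψ₁ R₁ B₁ ψ₂ R₂ B₂ (v₁, 0)) u f →
        IsHarmDecomp (prodRep R₁ R₂) ν (vhatB2 ψ₁ R₁ B₁ ψ₂ R₂ B₂ (0, v₂)) u' f' →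
        cov (prodRep R₁ R₂) ν u u' = 0) := by
  have hI : (Λ₁.prod Λ₂).index ≠ 0 := by
    rw [Subgroup.index_prod]
    exact mul_ne_zero hI₁ hI₂
  have hC₁ := covers_fst hN₂ hI₂ R₁ R₂ hν.2.summable
  have hC₂ := covers_snd hN₁ hI₁ R₁ R₂ hν.2.summable
  have hp₁ := hC₁.isProb hν (marg1_nonneg hν.1)
  have hp₂ := hC₂.isProb hν (marg2_nonneg hν.1)
  have hnd₁ := nondeg_marg1 hν hnd
  have hnd₂ := nondeg_marg2 hν hnd
  have hW₁ : ∀ v₁ x s, vhatB2 ψ₁ R₁ B₁ ψ₂ R₂ B₂ (v₁, 0) x s =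
      vhatB ψ₁ R₁ B₁ v₁ (MonoidHom.fst Γ₁ Γ₂ x) (MonoidHom.fst Γ₁ Γ₂ s) := fun v₁ x s => by
    simp [vhatB2, vhatB]
  have hW₂ : ∀ v₂ x s, vhatB2 ψ₁ R₁ B₁ ψ₂ R₂ B₂ (0, v₂) x s =
      vhatB ψ₂ R₂ B₂ v₂ (MonoidHom.snd Γ₁ Γ₂ x) (MonoidHom.snd Γ₁ Γ₂ s) := fun v₂ x s => by
    simp [vhatB2, vhatB]
  have hr₁ := transfer_mem_range (R := R₁) hN₁ hI₁ hAd₁ hT₁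
  have hr₂ := transfer_mem_range (R := R₂) hN₂ hI₂ hAd₂ hT₂
  refine ⟨hnd₁, hnd₂, hC₁.drift_mem hν.1 hmom hr₁, hC₂.drift_mem hν.1 hmom hr₂, ?_, ?_, ?_⟩
  · intro v₁ v₁' u u' f f' u₁ u₁' g g' hu hu' hu₁ hu₁'
    exact hC₁.cov_eq hI hI₁ hν hnd hp₁ hnd₁ (hW₁ v₁) (hW₁ v₁') hu hu' hu₁ hu₁'
  · intro v₂ v₂' u u' f f' u₂ u₂' g g' hu hu' hu₂ hu₂'
    exact hC₂.cov_eq hI hI₂ hν hnd hp₂ hnd₂ (hW₂ v₂) (hW₂ v₂') hu hu' hu₂ hu₂'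
  · intro v₁ v₂ u u' f f' hv hu hu'
    obtain ⟨g, hg⟩ := hC₁.exists_harmonic_part_eq hI hν hnd (hW₁ v₁) hu
    obtain ⟨g', hg'⟩ := hC₂.exists_harmonic_part_eq hI hν hnd (hW₂ v₂) hu'
    exact cov_prod_eq_zero hI hν hu.2.1.1 hu'.2.1.1
      (a := fun y t => vhatB ψ₁ R₁ B₁ v₁ y t - dd R₁ g y t)
      (b := fun y t => vhatB ψ₂ R₂ B₂ v₂ y t - dd R₂ g' y t) hg hg'
      (hv.imp (fun h => sum_vhatB_sub_dd (fun s => h _ (hr₁ s)) g)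
        (fun h => sum_vhatB_sub_dd (fun s => h _ (hr₂ s)) g'))

end NSVA
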